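/- Let y ∈ V^n be a probability vector with positive components and let k ≥ 1 be an integer. If T_{k+1}(y) = S(y), then T_k(y) = S(y). Consequently, if T_k(y) = S(y) for some k ≥ 1, then T_l(y) = S(y) for every l ≤ k. -/

import Mathlib

/-!
Let `x ⊗ c ≺ y ⊗ c` with `e_l(x) > e_l(y)`, and let `u` be the infimum of `x` and `y` for
majorization, so that `e_l(u) = min (e_l(x)) (e_l(y))` for all `l`. Stretch `c` to the larger
dimension by repeating its last component. If `x ⊗ c` then exceeds `y ⊗ c` at some threshold, the
original `c` can only have worked because for some component of it `x` lies strictly below `y` at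
the rescaled threshold; there `u`, which is majorized by `x`, lies strictly below `y` as well.
Therefore `v = (1 - r) u + r x` satisfies `v ⊗ c ≺ y ⊗ c` for the stretched `c` and small `r > 0`,
whereas `e_l(v) = (1 - r) e_l(y) + r e_l(x) > e_l(y)`.
-/

noncomputable section

/-- `eSum x l` : the sum of the `l` largest components of `x`. -/
def eSum {n : ℕ} (x : Fin n → ℝ) (l : ℕ) : ℝ :=
  sSup {r | ∃ s : Finset (Fin n), s.card = l ∧ r = ∑ i ∈ s, x i}

/-- `ESum x l` : the sum of the `l` smallest components of `x`. -/
def ESum {n : ℕ} (x : Fin n → ℝ) (l : ℕ) : ℝ :=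
  sInf {r | ∃ s : Finset (Fin n), s.card = l ∧ r = ∑ i ∈ s, x i}

/-- Majorization `x ≺ y` (for vectors with equal total sum):
`e_l(x) ≤ e_l(y)` for all `1 ≤ l ≤ n`. -/
def Maj {n : ℕ} (x y : Fin n → ℝ) : Prop :=
  (∑ i, x i) = (∑ i, y i) ∧ ∀ l : ℕ, 1 ≤ l → l ≤ n → eSum x l ≤ eSum y l

/-- Strict majorization `x ◁ y`: equal total sums and `e_l(x) < e_l(y)` for all
`1 ≤ l ≤ n - 1`. -/
def SMaj {n : ℕ} (x y : Fin n → ℝ) : Prop :=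
  (∑ i, x i) = (∑ i, y i) ∧ ∀ l : ℕ, 1 ≤ l → l + 1 ≤ n → eSum x l < eSum y l

/-- Super-majorization `x ≺ʷ y` : `E_l(x) ≥ E_l(y)` for all `1 ≤ l ≤ n`. -/
def SupMaj {n : ℕ} (x y : Fin n → ℝ) : Prop :=
  ∀ l : ℕ, 1 ≤ l → l ≤ n → ESum y l ≤ ESum x l

/-- Strict super-majorization `x ◁ʷ y` : `E_l(x) > E_l(y)` for all `1 ≤ l ≤ n`. -/
def SSupMaj {n : ℕ} (x y : Fin n → ℝ) : Prop :=
  ∀ l : ℕ, 1 ≤ l → l ≤ n → ESum y l < ESum x l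

/-- Tensor product of two vectors: the vector of all pairwise products. -/
def tensor {m k : ℕ} (x : Fin m → ℝ) (c : Fin k → ℝ) : Fin (m * k) → ℝ :=
  fun i => x (finProdFinEquiv.symm i).1 * c (finProdFinEquiv.symm i).2

/-- `k`-fold tensor power of a vector. -/
def tpow {n : ℕ} (x : Fin n → ℝ) (k : ℕ) : Fin (n ^ k) → ℝ :=
  fun i => ∏ j : Fin k, x (finFunctionFinEquiv.symm i j)

/-- `V^n` : probability vectors with components in non-increasing order. -/
def Vn (n : ℕ) : Set (Fin n → ℝ) :=
  {x | (∀ i, 0 ≤ x i) ∧ (∑ i, x i) = 1 ∧ Antitone x}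

/-- `S(y)` : members of `V^n` majorized by `y`. -/
def Sset {n : ℕ} (y : Fin n → ℝ) : Set (Fin n → ℝ) :=
  {x ∈ Vn n | Maj x y}

/-- `T(y,c)` : members of `V^n` with `x ⊗ c ≺ y ⊗ c`. -/
def Tcat {n k : ℕ} (y : Fin n → ℝ) (c : Fin k → ℝ) : Set (Fin n → ℝ) :=
  {x ∈ Vn n | Maj (tensor x c) (tensor y c)}

/-- Local uniformity `l_u(c)` : the minimum of the consecutive ratios `c_{i+1}/c_i`. -/
def lu {k : ℕ} (c : Fin k → ℝ) : ℝ :=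
  sInf {r | ∃ i : ℕ, ∃ h : i + 1 < k, r = c ⟨i + 1, h⟩ / c ⟨i, Nat.lt_of_succ_lt h⟩}

/-- Global uniformity `g_u(c) = c_k / c_1` (smallest over largest component of a
non-increasingly ordered vector). -/
def gu {k : ℕ} (c : Fin k → ℝ) : ℝ :=
  if h : 0 < k then c ⟨k - 1, Nat.sub_lt h Nat.one_pos⟩ / c ⟨0, h⟩ else 1

/-- Largest component. -/
def maxc {n : ℕ} (x : Fin n → ℝ) : ℝ := sSup (Set.range x)

/-- Smallest component. -/
def minc {n : ℕ} (x : Fin n → ℝ) : ℝ := sInf (Set.range x)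

/-- `c'` is a (contiguous) segment of `c`. -/
def IsSegment {j k : ℕ} (c' : Fin j → ℝ) (c : Fin k → ℝ) : Prop :=
  ∃ (i : ℕ) (_h : i + j ≤ k), ∀ t : Fin j, c' t = c ⟨i + t, by have := t.isLt; omega⟩

/-- The first `d` components of a vector. -/
def take {n : ℕ} (x : Fin n → ℝ) (d : ℕ) (h : d ≤ n) : Fin d → ℝ :=
  fun i => x ⟨i, Nat.lt_of_lt_of_le i.isLt h⟩

/-- The components of a vector after the first `d` ones. -/
def drop {n : ℕ} (x : Fin n → ℝ) (d : ℕ) : Fin (n - d) → ℝ :=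
  fun i => x ⟨d + i, by have := i.isLt; omega⟩

/-- The segment `(c_i, …, c_j)` of `c` (`0`-based indices). -/
def seg {k : ℕ} (c : Fin k → ℝ) (i j : ℕ) (hij : i ≤ j) (hj : j < k) :
    Fin (j - i + 1) → ℝ :=
  fun t => c ⟨i + t, by have := t.isLt; omega⟩

/-- `(c_i, …, c_j)` is a block of the decomposition `[c]_α` of the (positive,
non-increasingly ordered) vector `c` according to `α`: ratios within the block
exceed `α`, and the ratios at the two boundaries of the block are `≤ α`
(or the block touches an end of `c`). -/
def IsBlock {k : ℕ} (α : ℝ) (c : Fin k → ℝ) (i j : ℕ) : Prop :=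
  ∃ (hij : i ≤ j) (hj : j < k),
    (i = 0 ∨ c ⟨i, by omega⟩ / c ⟨i - 1, by omega⟩ ≤ α) ∧
    (j = k - 1 ∨ ∃ hj1 : j + 1 < k, c ⟨j + 1, hj1⟩ / c ⟨j, hj⟩ ≤ α) ∧
    (∀ (t : ℕ) (ht1 : i ≤ t) (ht2 : t < j), α < c ⟨t + 1, by omega⟩ / c ⟨t, by omega⟩)

/-- `T_k(y)` : states transformable to `y` with a `k`-dimensional catalyst. -/
def Tk {n : ℕ} (k : ℕ) (y : Fin n → ℝ) : Set (Fin n → ℝ) :=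
  {x ∈ Vn n | ∃ c : Fin k → ℝ, (∀ i, 0 < c i) ∧ (∑ i, c i) = 1 ∧ Antitone c ∧
    Maj (tensor x c) (tensor y c)}

/-- `M_k(y)` : states `x` with `x^{⊗k} ≺ y^{⊗k}`. -/
def Mk {n : ℕ} (k : ℕ) (y : Fin n → ℝ) : Set (Fin n → ℝ) :=
  {x ∈ Vn n | Maj (tpow x k) (tpow y k)}

/-- `T(y)` : states transformable to `y` with some catalyst. -/
def Tinf {n : ℕ} (y : Fin n → ℝ) : Set (Fin n → ℝ) :=
  {x ∈ Vn n | ∃ (k : ℕ) (c : Fin k → ℝ), 0 < k ∧ (∀ i, 0 < c i) ∧ (∑ i, c i) = 1 ∧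
    Antitone c ∧ Maj (tensor x c) (tensor y c)}

/-- `M(y)` : states `x` with `x^{⊗k} ≺ y^{⊗k}` for some `k ≥ 1`. -/
def Minf {n : ℕ} (y : Fin n → ℝ) : Set (Fin n → ℝ) :=
  {x ∈ Vn n | ∃ k : ℕ, 1 ≤ k ∧ Maj (tpow x k) (tpow y k)}

/-- `S^λ(y)` : states `x` with `x ≺ʷ λ y`. -/
def Slam {n : ℕ} (lam : ℝ) (y : Fin n → ℝ) : Set (Fin n → ℝ) :=
  {x ∈ Vn n | SupMaj x (fun i => lam * y i)}

/-- `T^λ(y,c)` : states `x` with `x ⊗ c ≺ʷ λ (y ⊗ c)`. -/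
def Tlamc {n k : ℕ} (lam : ℝ) (y : Fin n → ℝ) (c : Fin k → ℝ) : Set (Fin n → ℝ) :=
  {x ∈ Vn n | SupMaj (tensor x c) (fun i => lam * tensor y c i)}

/-- `T_k^λ(y)`. -/
def Tklam {n : ℕ} (k : ℕ) (lam : ℝ) (y : Fin n → ℝ) : Set (Fin n → ℝ) :=
  {x ∈ Vn n | ∃ c : Fin k → ℝ, (∀ i, 0 < c i) ∧ (∑ i, c i) = 1 ∧ Antitone c ∧
    SupMaj (tensor x c) (fun i => lam * tensor y c i)}

/-- `M_k^λ(y)`. -/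
def Mklam {n : ℕ} (k : ℕ) (lam : ℝ) (y : Fin n → ℝ) : Set (Fin n → ℝ) :=
  {x ∈ Vn n | SupMaj (tpow x k) (fun i => lam ^ k * tpow y k i)}

/-- `T^λ(y)`. -/
def Tlaminf {n : ℕ} (lam : ℝ) (y : Fin n → ℝ) : Set (Fin n → ℝ) :=
  {x ∈ Vn n | ∃ (k : ℕ) (c : Fin k → ℝ), 0 < k ∧ (∀ i, 0 < c i) ∧ (∑ i, c i) = 1 ∧
    Antitone c ∧ SupMaj (tensor x c) (fun i => lam * tensor y c i)}

/-- `M^λ(y)`. -/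
def Mlaminf {n : ℕ} (lam : ℝ) (y : Fin n → ℝ) : Set (Fin n → ℝ) :=
  {x ∈ Vn n | ∃ k : ℕ, 1 ≤ k ∧ SupMaj (tpow x k) (fun i => lam ^ k * tpow y k i)}

/-- `K_d(y)` : concatenations `x = x' ⊕ x''` with `x' ◁ y'` and `x'' ◁ y''`,
where `y'` is the first-`d` part of `y` and `y''` the rest. -/
def Kd {n : ℕ} (y : Fin n → ℝ) (d : ℕ) (h : d ≤ n) : Set (Fin n → ℝ) :=
  {x ∈ Vn n | SMaj (take x d h) (take y d h) ∧ SMaj (drop x d) (drop y d)}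

/-- `y(d)` : first `d` components equal to `e_d(y)/d`, the last `n-d` equal to
`(1 - e_d(y))/(n-d)`. -/
def yvec {n : ℕ} (y : Fin n → ℝ) (d : ℕ) : Fin n → ℝ :=
  fun i => if (i : ℕ) < d then eSum y d / d else (1 - eSum y d) / (n - d)

/-- `K_d^λ(y)` : states `x ∈ S^λ(y)` with `E_l(x) = λ E_l(y)` iff `l = n - d`. -/
def Kdlam {n : ℕ} (lam : ℝ) (y : Fin n → ℝ) (d : ℕ) : Set (Fin n → ℝ) :=
  {x ∈ Vn n | SupMaj x (fun i => lam * y i) ∧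
    ∀ l : ℕ, 1 ≤ l → l ≤ n → (ESum x l = lam * ESum y l ↔ l = n - d)}

/-- The total excess `∑ᵢ (xᵢ - t)⁺` of `x` over the threshold `t`. Comparing excesses at all
thresholds is equivalent to majorization, and unlike `eSum` the excess of `x ⊗ c` is a plain sum
over the components of `c`. -/
def excess {ι : Type*} [Fintype ι] (x : ι → ℝ) (t : ℝ) : ℝ := ∑ i, (x i - t)⁺

/-- The infimum of two non-increasing vectors for majorization, encoded as the increments of
`l ↦ min (e_l(x)) (e_l(y))`. -/
def majInf {n : ℕ} (x y : Fin n → ℝ) : Fin n → ℝ :=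
  fun i => min (eSum x (i + 1)) (eSum y (i + 1)) - min (eSum x i) (eSum y i)

section Excess

variable {ι : Type*} [Fintype ι] {x : ι → ℝ} {s : Finset ι} {t : ℝ}

theorem sum_sub_le_excess (x : ι → ℝ) (s : Finset ι) (t : ℝ) :
    ∑ i ∈ s, x i - s.card * t ≤ excess x t :=
  calc ∑ i ∈ s, x i - s.card * t = ∑ i ∈ s, (x i - t) := by
        rw [Finset.sum_sub_distrib, Finset.sum_const, nsmul_eq_mul]
    _ ≤ ∑ i ∈ s, (x i - t)⁺ := Finset.sum_le_sum fun _ _ => le_posPart _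
    _ ≤ excess x t := Finset.sum_le_univ_sum_of_nonneg fun _ => posPart_nonneg _

theorem excess_eq_sum_sub (hs : ∀ i ∈ s, t ≤ x i) (hs' : ∀ i ∉ s, x i ≤ t) :
    excess x t = ∑ i ∈ s, x i - s.card * t :=
  calc excess x t = ∑ i ∈ s, (x i - t)⁺ :=
        (Finset.sum_subset s.subset_univ fun i _ hi =>
          posPart_eq_zero.2 (sub_nonpos.2 (hs' i hi))).symm
    _ = ∑ i ∈ s, (x i - t) :=
        Finset.sum_congr rfl fun i hi => posPart_eq_self.2 (sub_nonneg.2 (hs i hi))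
    _ = ∑ i ∈ s, x i - s.card * t := by
        rw [Finset.sum_sub_distrib, Finset.sum_const, nsmul_eq_mul]

end Excess

section Majorization

variable {n k k' l : ℕ} {u x y : Fin n → ℝ} {c : Fin k → ℝ} {t : ℝ}

theorem finite_sums_of_card_eq (x : Fin n → ℝ) (l : ℕ) :
    {r | ∃ s : Finset (Fin n), s.card = l ∧ r = ∑ i ∈ s, x i}.Finite :=
  (Set.finite_range fun s : Finset (Fin n) => ∑ i ∈ s, x i).subset <| by
    rintro _ ⟨s, -, rfl⟩
    exact ⟨s, rfl⟩

theorem sum_le_eSum (x : Fin n → ℝ) (s : Finset (Fin n)) : ∑ i ∈ s, x i ≤ eSum x s.card :=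
  le_csSup (finite_sums_of_card_eq x _).bddAbove ⟨s, rfl, rfl⟩

theorem exists_sum_eq_eSum (x : Fin n → ℝ) (hl : l ≤ n) :
    ∃ s : Finset (Fin n), s.card = l ∧ eSum x l = ∑ i ∈ s, x i := by
  obtain ⟨s, -, hs⟩ := Finset.exists_subset_card_eq (s := (Finset.univ : Finset (Fin n)))
    (hl.trans_eq (Finset.card_fin n).symm)
  have hne : {r | ∃ s : Finset (Fin n), s.card = l ∧ r = ∑ i ∈ s, x i}.Nonempty :=
    ⟨_, s, hs, rfl⟩
  exact hne.csSup_mem (finite_sums_of_card_eq x l)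

@[simp]
theorem eSum_zero (x : Fin n → ℝ) : eSum x 0 = 0 := by
  obtain ⟨s, hs, h⟩ := exists_sum_eq_eSum x n.zero_le
  rw [h, Finset.card_eq_zero.1 hs, Finset.sum_empty]

theorem eSum_card (x : Fin n → ℝ) : eSum x n = ∑ i, x i := by
  obtain ⟨s, hs, h⟩ := exists_sum_eq_eSum x le_rfl
  rw [h, (Finset.card_eq_iff_eq_univ s).1 (hs.trans (Fintype.card_fin n).symm)]

theorem eSum_smul {a : ℝ} (ha : 0 ≤ a) (x : Fin n → ℝ) (hl : l ≤ n) :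
    eSum (a • x) l = a * eSum x l := by
  apply le_antisymm
  · obtain ⟨s, rfl, hs⟩ := exists_sum_eq_eSum (a • x) hl
    simp only [hs, Pi.smul_apply, smul_eq_mul, ← Finset.mul_sum]
    exact mul_le_mul_of_nonneg_left (sum_le_eSum x s) ha
  · obtain ⟨s, rfl, hs⟩ := exists_sum_eq_eSum x hl
    rw [hs, Finset.mul_sum]
    exact sum_le_eSum (a • x) s

theorem eSum_add_le (x y : Fin n → ℝ) (hl : l ≤ n) :
    eSum (x + y) l ≤ eSum x l + eSum y l := by
  obtain ⟨s, rfl, hs⟩ := exists_sum_eq_eSum (x + y) hl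
  simp only [hs, Pi.add_apply, Finset.sum_add_distrib]
  exact add_le_add (sum_le_eSum x s) (sum_le_eSum y s)

theorem eSum_le_add_excess (x : Fin n → ℝ) (hl : l ≤ n) (t : ℝ) :
    eSum x l ≤ l * t + excess x t := by
  obtain ⟨s, rfl, hs⟩ := exists_sum_eq_eSum x hl
  linarith [sum_sub_le_excess x s t]

theorem eSum_eq_sum {s : Finset (Fin n)} (hs : ∀ i ∈ s, t ≤ x i) (hs' : ∀ i ∉ s, x i ≤ t) :
    eSum x s.card = ∑ i ∈ s, x i := by
  have hle := eSum_le_add_excess x (s.card_le_univ.trans_eq (Fintype.card_fin n)) t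
  rw [excess_eq_sum_sub hs hs'] at hle
  linarith [sum_le_eSum x s]

theorem exists_eSum_eq_add_excess (x : Fin n → ℝ) (h1 : 1 ≤ l) (hl : l ≤ n) :
    ∃ t, eSum x l = l * t + excess x t := by
  obtain ⟨s, rfl, hs⟩ := exists_sum_eq_eSum x hl
  obtain ⟨m, hm, hmin⟩ := s.exists_min_image x (Finset.card_pos.1 h1)
  -- otherwise exchanging `m` for `i` would increase the sum over `s`
  have hmax : ∀ i ∉ s, x i ≤ x m := by
    intro i hi
    have hi' : i ∉ s.erase m := fun h => hi (Finset.mem_of_mem_erase h)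
    have hexch := sum_le_eSum x (insert i (s.erase m))
    rw [Finset.card_insert_of_notMem hi', Finset.card_erase_add_one hm, hs,
      Finset.sum_insert hi', ← Finset.add_sum_erase s x hm] at hexch
    linarith
  exact ⟨x m, by rw [excess_eq_sum_sub hmin hmax, hs]; ring⟩

theorem exists_excess_eq_eSum_sub (x : Fin n → ℝ) (t : ℝ) :
    ∃ l ≤ n, excess x t = eSum x l - l * t := by
  let s : Finset (Fin n) := {i | t ≤ x i}
  have hs : ∀ i ∈ s, t ≤ x i := fun i hi => (Finset.mem_filter_univ i).1 hi
  have hs' : ∀ i ∉ s, x i ≤ t := fun i hi =>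
    (not_le.1 fun hti => hi ((Finset.mem_filter_univ i).2 hti)).le
  exact ⟨s.card, s.card_le_univ.trans_eq (Fintype.card_fin n),
    by rw [excess_eq_sum_sub hs hs', eSum_eq_sum hs hs']⟩

theorem Maj.eSum_le (h : Maj x y) (hl : l ≤ n) : eSum x l ≤ eSum y l := by
  rcases l.eq_zero_or_pos with rfl | hpos
  · simp
  · exact h.2 l hpos hl

theorem maj_iff_excess :
    Maj x y ↔ ∑ i, x i = ∑ i, y i ∧ ∀ t, excess x t ≤ excess y t := by
  refine ⟨fun h => ⟨h.1, fun t => ?_⟩, fun h => ⟨h.1, fun l h1 hl => ?_⟩⟩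
  · obtain ⟨l, hl, hx⟩ := exists_excess_eq_eSum_sub x t
    linarith [h.eSum_le hl, eSum_le_add_excess y hl t]
  · obtain ⟨t, hy⟩ := exists_eSum_eq_add_excess y h1 hl
    linarith [eSum_le_add_excess x hl t, h.2 t]

theorem Maj.excess_le (h : Maj x y) (t : ℝ) : excess x t ≤ excess y t :=
  (maj_iff_excess.1 h).2 t

theorem eSum_lt_of_excess_lt (h : ∀ t, excess y t < excess x t → excess u t < excess y t)
    (h1 : 1 ≤ l) (hl : l ≤ n) (hlt : eSum y l < eSum x l) : eSum u l < eSum y l := by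
  obtain ⟨t, hy⟩ := exists_eSum_eq_add_excess y h1 hl
  linarith [eSum_le_add_excess u hl t, h t (by linarith [eSum_le_add_excess x hl t])]

theorem Maj.smul {a : ℝ} (ha : 0 ≤ a) (h : Maj x y) : Maj (a • x) (a • y) := by
  refine ⟨?_, fun l _ hl => ?_⟩
  · simp only [Pi.smul_apply, ← Finset.smul_sum, h.1]
  · rw [eSum_smul ha x hl, eSum_smul ha y hl]
    exact mul_le_mul_of_nonneg_left (h.eSum_le hl) ha

theorem sum_convexCombo {ι : Type*} [Fintype ι] (a b : ℝ) (u x : ι → ℝ) :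
    ∑ i, (a • u + b • x) i = a * ∑ i, u i + b * ∑ i, x i := by
  rw [Finset.mul_sum, Finset.mul_sum, ← Finset.sum_add_distrib]
  rfl

open Filter Topology in
theorem Maj.eventually_convexCombo (hu : Maj u y) (hsum : ∑ i, x i = ∑ i, y i)
    (h : ∀ l, 1 ≤ l → l ≤ n → eSum y l < eSum x l → eSum u l < eSum y l) :
    ∀ᶠ r : ℝ in 𝓝[>] 0, Maj ((1 - r) • u + r • x) y := by
  have hIoo : ∀ᶠ r : ℝ in 𝓝[>] 0, r ∈ Set.Ioo 0 1 := Ioo_mem_nhdsGT zero_lt_one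
  have hbound : ∀ᶠ r : ℝ in 𝓝[>] 0, ∀ l ∈ Finset.Icc 1 n,
      (1 - r) * eSum u l + r * eSum x l ≤ eSum y l := by
    refine (eventually_all_finset _).2 fun l hl => ?_
    obtain ⟨h1, hn⟩ := Finset.mem_Icc.1 hl
    rcases lt_or_ge (eSum y l) (eSum x l) with hlt | hle
    · have hcont : Continuous fun r : ℝ => (1 - r) * eSum u l + r * eSum x l := by fun_prop
      have hev := hcont.continuousAt.eventually_lt continuousAt_const
        (show (1 - 0) * eSum u l + 0 * eSum x l < eSum y l by simpa using h l h1 hn hlt)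
      exact nhdsWithin_le_nhds (hev.mono fun _ => le_of_lt)
    · filter_upwards [hIoo] with r hr
      exact (convex_Iic (eSum y l)) (hu.eSum_le hn) hle (sub_nonneg.2 hr.2.le) hr.1.le (by ring)
  filter_upwards [hIoo, hbound] with r hr hrl
  refine ⟨?_, fun l h1 hn => ?_⟩
  · rw [sum_convexCombo, hu.1, hsum, ← add_mul, sub_add_cancel, one_mul]
  · calc eSum ((1 - r) • u + r • x) l ≤ eSum ((1 - r) • u) l + eSum (r • x) l :=
          eSum_add_le _ _ hn
      _ = (1 - r) * eSum u l + r * eSum x l := by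
          rw [eSum_smul (sub_nonneg.2 hr.2.le) u hn, eSum_smul hr.1.le x hn]
      _ ≤ eSum y l := hrl l (Finset.mem_Icc.2 ⟨h1, hn⟩)

theorem eSum_eq_sum_of_antitone (hx : Antitone x) (hl : l ≤ n) :
    eSum x l = ∑ i : Fin n with i.val < l, x i := by
  rcases l.eq_zero_or_pos with rfl | hpos
  · simp
  let s : Finset (Fin n) := {i | i.val < l}
  have hcard : s.card = l := by rw [Fin.card_filter_val_lt, min_eq_right hl]
  have hs : ∀ i, i ∈ s ↔ i.val < l := fun i => Finset.mem_filter_univ i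
  have hsum : eSum x s.card = ∑ i ∈ s, x i := eSum_eq_sum (t := x ⟨l - 1, by omega⟩)
    (fun i hi => hx (Fin.le_def.2 (Nat.le_sub_one_of_lt ((hs i).1 hi))))
    (fun i hi => hx (Fin.le_def.2 ((Nat.sub_le l 1).trans (not_lt.1 (mt (hs i).2 hi)))))
  rwa [hcard] at hsum

theorem eSum_succ (hx : Antitone x) (hl : l < n) :
    eSum x (l + 1) = eSum x l + x ⟨l, hl⟩ := by
  have hinsert : ({i | i.val < l + 1} : Finset (Fin n)) =
      insert ⟨l, hl⟩ ({i | i.val < l} : Finset (Fin n)) := by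
    ext i
    simp [Fin.ext_iff, Nat.le_iff_lt_or_eq, or_comm]
  rw [eSum_eq_sum_of_antitone hx hl, eSum_eq_sum_of_antitone hx hl.le, hinsert,
    Finset.sum_insert (by simp), add_comm]

theorem eSum_add (hx : Antitone x) (hy : Antitone y) (hl : l ≤ n) :
    eSum (x + y) l = eSum x l + eSum y l := by
  have hxy : Antitone (x + y) := hx.add hy
  rw [eSum_eq_sum_of_antitone hxy hl, eSum_eq_sum_of_antitone hx hl,
    eSum_eq_sum_of_antitone hy hl, ← Finset.sum_add_distrib]
  rfl

theorem eSum_le_eSum_succ (hx0 : ∀ i, 0 ≤ x i) (hx : Antitone x) (hl : l < n) :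
    eSum x l ≤ eSum x (l + 1) := by
  rw [eSum_succ hx hl]
  exact le_add_of_nonneg_right (hx0 _)

theorem antitone_majInf (hx : Antitone x) (hy : Antitone y) : Antitone (majInf x y) := by
  rcases n with _ | n
  · exact Subsingleton.antitone _
  refine Fin.antitone_iff_succ_le.2 fun i => ?_
  have hi : (i : ℕ) < n + 1 := i.isLt.trans n.lt_succ_self
  have hi' : (i : ℕ) + 1 < n + 1 := Nat.succ_lt_succ i.isLt
  have hxi : x i.succ ≤ x i.castSucc := hx i.castSucc_lt_succ.le
  have hyi : y i.succ ≤ y i.castSucc := hy i.castSucc_lt_succ.le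
  have hx1 : eSum x (i + 1) = eSum x i + x i.castSucc := eSum_succ hx hi
  have hy1 : eSum y (i + 1) = eSum y i + y i.castSucc := eSum_succ hy hi
  have hx2 : eSum x (i + 1 + 1) = eSum x (i + 1) + x i.succ := eSum_succ hx hi'
  have hy2 : eSum y (i + 1 + 1) = eSum y (i + 1) + y i.succ := eSum_succ hy hi'
  simp only [majInf, Fin.val_succ, Fin.val_castSucc]
  -- the branch attaining the middle minimum is concave and bounds the minima on both sides
  rcases min_choice (eSum x (i + 1)) (eSum y (i + 1)) with hmin | hmin
  · linarith [min_le_left (eSum x i) (eSum y i),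
      min_le_left (eSum x (i + 1 + 1)) (eSum y (i + 1 + 1))]
  · linarith [min_le_right (eSum x i) (eSum y i),
      min_le_right (eSum x (i + 1 + 1)) (eSum y (i + 1 + 1))]

theorem eSum_majInf (hx : Antitone x) (hy : Antitone y) (hl : l ≤ n) :
    eSum (majInf x y) l = min (eSum x l) (eSum y l) := by
  induction l with
  | zero => simp
  | succ l ih =>
    rw [eSum_succ (antitone_majInf hx hy) hl, ih (Nat.le_of_succ_le hl), majInf]
    exact add_sub_cancel _ _

theorem sum_majInf (hx : Antitone x) (hy : Antitone y) (hsum : ∑ i, x i = ∑ i, y i) :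
    ∑ i, majInf x y i = ∑ i, x i := by
  rw [← eSum_card, eSum_majInf hx hy le_rfl, eSum_card, eSum_card, ← hsum, min_self]

theorem majInf_maj_left (hx : Antitone x) (hy : Antitone y) (hsum : ∑ i, x i = ∑ i, y i) :
    Maj (majInf x y) x :=
  ⟨sum_majInf hx hy hsum, fun _ _ hl => (eSum_majInf hx hy hl).trans_le (min_le_left _ _)⟩

theorem majInf_maj_right (hx : Antitone x) (hy : Antitone y) (hsum : ∑ i, x i = ∑ i, y i) :
    Maj (majInf x y) y :=
  ⟨(sum_majInf hx hy hsum).trans hsum,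
    fun _ _ hl => (eSum_majInf hx hy hl).trans_le (min_le_right _ _)⟩

theorem majInf_mem_Vn (hx : x ∈ Vn n) (hy : y ∈ Vn n) : majInf x y ∈ Vn n := by
  obtain ⟨hx0, hx1, hxanti⟩ := hx
  obtain ⟨hy0, hy1, hyanti⟩ := hy
  refine ⟨fun i => sub_nonneg.2 (min_le_min ?_ ?_),
    (sum_majInf hxanti hyanti (hx1.trans hy1.symm)).trans hx1, antitone_majInf hxanti hyanti⟩
  · exact eSum_le_eSum_succ hx0 hxanti i.isLt
  · exact eSum_le_eSum_succ hy0 hyanti i.isLt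

theorem convex_Vn (n : ℕ) : Convex ℝ (Vn n) := by
  rintro u ⟨hu0, hu1, hu⟩ x ⟨hx0, hx1, hx⟩ a b ha hb hab
  refine ⟨fun i => ?_, ?_, (hu.const_smul ha).add (hx.const_smul hb)⟩
  · exact add_nonneg (mul_nonneg ha (hu0 i)) (mul_nonneg hb (hx0 i))
  · rw [sum_convexCombo, hu1, hx1, mul_one, mul_one, hab]

theorem tensor_convexCombo (a b : ℝ) (u x : Fin n → ℝ) (c : Fin k → ℝ) :
    tensor (a • u + b • x) c = a • tensor u c + b • tensor x c := by
  funext i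
  simp only [tensor, Pi.add_apply, Pi.smul_apply, smul_eq_mul]
  ring

theorem tensor_smul_right (a : ℝ) (x : Fin n → ℝ) (c : Fin k → ℝ) :
    tensor x (a • c) = a • tensor x c :=
  funext fun _ => mul_left_comm _ _ _

theorem sum_comp_tensor (g : ℝ → ℝ) (x : Fin n → ℝ) (c : Fin k → ℝ) :
    ∑ i, g (tensor x c i) = ∑ j, ∑ i, g (x i * c j) := by
  rw [← Equiv.sum_comp finProdFinEquiv, Fintype.sum_prod_type_right]
  simp only [tensor, Equiv.symm_apply_apply]

theorem sum_tensor (x : Fin n → ℝ) (c : Fin k → ℝ) :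
    ∑ i, tensor x c i = (∑ i, x i) * ∑ j, c j := by
  rw [Finset.sum_mul_sum, Finset.sum_comm]
  exact sum_comp_tensor id x c

theorem excess_tensor (x : Fin n → ℝ) (hc : ∀ j, 0 < c j) (t : ℝ) :
    excess (tensor x c) t = ∑ j, c j * excess x (t / c j) := by
  rw [excess, sum_comp_tensor fun r => (r - t)⁺]
  simp only [excess, Finset.mul_sum]
  refine Finset.sum_congr rfl fun j _ => Finset.sum_congr rfl fun i _ => ?_
  rw [posPart_def, posPart_def, mul_max_of_nonneg _ _ (hc j).le, mul_zero, mul_sub,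
    mul_div_cancel₀ _ (hc j).ne', mul_comm]

theorem Maj.tensor_right (h : Maj x y) (hc : ∀ j, 0 < c j) : Maj (tensor x c) (tensor y c) := by
  refine maj_iff_excess.2 ⟨by rw [sum_tensor, sum_tensor, h.1], fun t => ?_⟩
  rw [excess_tensor x hc, excess_tensor y hc]
  exact Finset.sum_le_sum fun j _ => mul_le_mul_of_nonneg_left (h.excess_le _) (hc j).le

theorem exists_excess_lt_of_maj_tensor (hc : ∀ j, 0 < c j) (h : Maj (tensor x c) (tensor y c))
    (f : Fin k' → Fin k) (ht : excess (tensor y (c ∘ f)) t < excess (tensor x (c ∘ f)) t) :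
    ∃ j, excess x (t / c j) < excess y (t / c j) := by
  by_contra! hge
  have hterm : ∀ j ∈ Finset.univ,
      c j * excess y (t / c j) ≤ c j * excess x (t / c j) :=
    fun j _ => mul_le_mul_of_nonneg_left (hge j) (hc j).le
  have hsum : ∑ j, c j * excess x (t / c j) ≤ ∑ j, c j * excess y (t / c j) := by
    simpa only [excess_tensor _ hc] using h.excess_le t
  have heq := (Finset.sum_eq_sum_iff_of_le hterm).1 ((Finset.sum_le_sum hterm).antisymm hsum)
  have hcf : ∀ j, 0 < (c ∘ f) j := fun j => hc (f j)
  rw [excess_tensor y hcf, excess_tensor x hcf] at ht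
  exact ht.ne (Finset.sum_congr rfl fun j _ => heq (f j) (Finset.mem_univ _))

theorem excess_tensor_comp_lt (hc : ∀ j, 0 < c j) (h : Maj (tensor x c) (tensor y c))
    (hux : Maj u x) (huy : Maj u y) {f : Fin k' → Fin k} (hf : Function.Surjective f)
    (ht : excess (tensor y (c ∘ f)) t < excess (tensor x (c ∘ f)) t) :
    excess (tensor u (c ∘ f)) t < excess (tensor y (c ∘ f)) t := by
  obtain ⟨j, hj⟩ := exists_excess_lt_of_maj_tensor hc h f ht
  obtain ⟨i, rfl⟩ := hf j
  have hcf : ∀ j, 0 < (c ∘ f) j := fun j => hc (f j)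
  rw [excess_tensor u hcf, excess_tensor y hcf]
  refine Finset.sum_lt_sum
    (fun i _ => mul_le_mul_of_nonneg_left (huy.excess_le _) (hcf i).le)
    ⟨i, Finset.mem_univ i, mul_lt_mul_of_pos_left ?_ (hcf i)⟩
  exact (hux.excess_le _).trans_lt hj

theorem exists_monotone_surjective_fin (hk : 1 ≤ k) (hkk' : k ≤ k') :
    ∃ f : Fin k' → Fin k, Monotone f ∧ Function.Surjective f :=
  ⟨fun j => ⟨min j (k - 1), by omega⟩, fun _ _ hij => min_le_min_right _ (Fin.le_def.1 hij),
    fun j => ⟨⟨j, by omega⟩, Fin.ext (min_eq_left (Nat.le_pred_of_lt j.isLt))⟩⟩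

theorem mem_Tk_of_maj_tensor (hk : 1 ≤ k) (hx : x ∈ Vn n) (hc : ∀ j, 0 < c j)
    (hcanti : Antitone c) (h : Maj (tensor x c) (tensor y c)) : x ∈ Tk k y := by
  have hpos : 0 < ∑ j, c j := Finset.sum_pos (fun j _ => hc j) ⟨⟨0, hk⟩, Finset.mem_univ _⟩
  have ha : 0 < (∑ j, c j)⁻¹ := inv_pos.2 hpos
  refine ⟨hx, (∑ j, c j)⁻¹ • c, fun j => mul_pos ha (hc j), ?_, hcanti.const_smul ha.le, ?_⟩
  · simp only [Pi.smul_apply, smul_eq_mul, ← Finset.mul_sum, inv_mul_cancel₀ hpos.ne']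
  · rw [tensor_smul_right, tensor_smul_right]
    exact h.smul ha.le

theorem Sset_subset_Tk (hk : 1 ≤ k) (y : Fin n → ℝ) : Sset y ⊆ Tk k y := fun _ hx =>
  have hone : ∀ _ : Fin k, (0 : ℝ) < 1 := fun _ => one_pos
  mem_Tk_of_maj_tensor hk hx.1 hone antitone_const (hx.2.tensor_right hone)

open Filter Topology in
theorem eventually_convexCombo_majInf_mem_Tk (hk : 1 ≤ k) (hkk' : k ≤ k') (hy : y ∈ Vn n)
    (hx : x ∈ Tk k y) : ∀ᶠ r : ℝ in 𝓝[>] 0, (1 - r) • majInf x y + r • x ∈ Tk k' y := by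
  obtain ⟨hxV, c, hc, -, hcanti, hmaj⟩ := hx
  obtain ⟨f, hfmono, hfsurj⟩ := exists_monotone_surjective_fin hk hkk'
  have hsum : ∑ i, x i = ∑ i, y i := hxV.2.1.trans hy.2.1.symm
  have hux := majInf_maj_left hxV.2.2 hy.2.2 hsum
  have huy := majInf_maj_right hxV.2.2 hy.2.2 hsum
  have hcf : ∀ j, 0 < (c ∘ f) j := fun j => hc (f j)
  have hev := (huy.tensor_right hcf).eventually_convexCombo (x := tensor x (c ∘ f))
    (by rw [sum_tensor, sum_tensor, hsum])
    (fun _ => eSum_lt_of_excess_lt fun _ => excess_tensor_comp_lt hc hmaj hux huy hfsurj)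
  filter_upwards [hev, Ioo_mem_nhdsGT zero_lt_one] with r hr ⟨hr0, hr1⟩
  rw [← tensor_convexCombo] at hr
  exact mem_Tk_of_maj_tensor (hk.trans hkk')
    (convex_Vn n (majInf_mem_Vn hxV hy) hxV (sub_nonneg.2 hr1.le) hr0.le (sub_add_cancel 1 r))
    hcf (hcanti.comp_monotone hfmono) hr

theorem eSum_lt_eSum_convexCombo_majInf (hx : Antitone x) (hy : Antitone y) (hl : l ≤ n)
    (hlt : eSum y l < eSum x l) {r : ℝ} (hr0 : 0 < r) (hr1 : r ≤ 1) :
    eSum y l < eSum ((1 - r) • majInf x y + r • x) l := by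
  have hr : 0 ≤ 1 - r := sub_nonneg.2 hr1
  have hu : Antitone ((1 - r) • majInf x y) := (antitone_majInf hx hy).const_smul hr
  have hrx : Antitone (r • x) := hx.const_smul hr0.le
  calc eSum y l < (1 - r) * eSum y l + r * eSum x l := by linarith [mul_lt_mul_of_pos_left hlt hr0]
    _ = eSum ((1 - r) • majInf x y + r • x) l := by
        rw [eSum_add hu hrx hl, eSum_smul hr _ hl,
          eSum_smul hr0.le x hl, eSum_majInf hx hy hl, min_eq_right hlt.le]

theorem stmt8_general (hk : 1 ≤ k) (hkk' : k ≤ k') (hy : y ∈ Vn n) (h : Tk k' y = Sset y) :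
    Tk k y = Sset y := by
  refine Set.Subset.antisymm (fun x hx => ⟨hx.1, ?_⟩) (Sset_subset_Tk hk y)
  have hxV : x ∈ Vn n := hx.1
  refine ⟨hxV.2.1.trans hy.2.1.symm, fun l h1 hl => ?_⟩
  by_contra! hlt
  obtain ⟨r, hr, hr0, hr1⟩ := ((eventually_convexCombo_majInf_mem_Tk hk hkk' hy hx).and
    (Ioo_mem_nhdsGT zero_lt_one)).exists
  rw [h] at hr
  exact (hr.2.2 l h1 hl).not_gt
    (eSum_lt_eSum_convexCombo_majInf hxV.2.2 hy.2.2 hl hlt hr0 hr1.le)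

end Majorization

/-- Theorem 10 of the paper. `T_{k+1}(y) = S(y)` implies
`T_k(y) = S(y)`, and consequently `T_k(y) = S(y)` implies `T_l(y) = S(y)`
for all `1 ≤ l ≤ k`. -/
theorem stmt8 {n k : ℕ} (hk : 1 ≤ k)
    (y : Fin n → ℝ) (hy : y ∈ Vn n) (hypos : ∀ i, 0 < y i) :
    (Tk (k + 1) y = Sset y → Tk k y = Sset y) ∧
    (∀ k' : ℕ, 1 ≤ k' → Tk k' y = Sset y →
      ∀ l : ℕ, 1 ≤ l → l ≤ k' → Tk l y = Sset y) :=
  ⟨stmt8_general hk k.le_succ hy, fun _ _ h _ hl hlk => stmt8_general hl hlk hy h⟩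

end
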